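/- For every integer n ≥ 6 and every j with 1 ≤ j ≤ n−5, there exist real rotation angles such that the n-qubit Ry-CNOT ansatz circuit of depth 16·2^{⌈log₂ n⌉} with those angles equals exactly CNOT_{j+1,j} (control qubit j+1, target qubit j, identity elsewhere); likewise there exist angles for the same depth realizing CNOT_{j,j+1}. Here ⌈log₂ n⌉ is the least integer m with n ≤ 2^m. -/

import Mathlib

/-!
The proof works in the interaction picture in which the ladder `L` is the free evolution. `L` permutes
the bit strings by a linear map `Λ` over the field with two elements. `Λ - 1` strictly lowers the
qubit index, so it is nilpotent, and `Λ ^ 2 ^ m - 1 = (Λ - 1) ^ 2 ^ m = 0` as soon as `n ≤ 2 ^ m`. Hence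
`L ^ D = 1` for `D = 2 ^ ⌈log₂ n⌉` (`ladder_pow`), and a circuit of depth `16 D` is a time-ordered
product of the operators `L⁻ᵐ R Lᵐ`, for rotation layers `R` at the times `m = 0, …, 16 D`.

Only the times `m ≡ 0, 1, -1` modulo `D` are used, with rotations by `±π/2` on single qubits. Such a
rotation is `(1 ± X Z)/√2`, and at times `±1` the string `X Z` becomes a short Pauli
string: the flipped bit spreads to at most two qubits of smaller index, and the measured bit to at
most two qubits of larger index (`moved_gen`). Thus everything takes place near the five qubits
`p, …, p + 4`, where `p` is the smaller of the two qubits of the CNOT, and the strings can be handled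
symbolically (`PauliW`, `op_mul`), uniformly in `n`.

If `P` and `Q` anticommute and square to `-1`, then conjugating `(1 + Q)/√2` by `(1 + P)/√2` gives
`(1 + P Q)/√2` (`conj_ehalf`), so quarter turns about longer strings can be composed from the
available ones. On the other hand `CNOT = 1 - 2 Π = exp(π J Π)` with `Π = (1 - Z)(1 - X)/4`, where `Z`
acts on the control, `X` on the target, and `J` is any Pauli string with `J² = -1` that commutes
with both. Expanding the exponent, the CNOT is the product of the quarter turns about `J`, `-J Z`,
`-J X` and `J Z X` (`four_ehalf`). It remains to write these four as iterated conjugations of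
available generators such that the resulting word fits into sixteen periods. `plan_down` and
`plan_up` list such words for both directions and for both parities of `n - p`; they are checked by
evaluating the symbolic products.
-/

open Complex

noncomputable section

/-- Basis states of `N` qubits: bit strings of length `N` (qubit `k` (1-based) ↦ index `k-1`). -/
abbrev QState (N : ℕ) := Fin N → ZMod 2

/-- Operators on `(ℂ²)^{⊗N}`, as matrices in the computational basis. -/
abbrev QOp (N : ℕ) := Matrix (QState N) (QState N) ℂ

/-- Ry(θ) = [[cos(θ/2), −sin(θ/2)], [sin(θ/2), cos(θ/2)]]. -/
def RyM (θ : ℝ) : Matrix (ZMod 2) (ZMod 2) ℂ :=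
  Matrix.of fun a b =>
    if a = 0 then (if b = 0 then ((Real.cos (θ/2) : ℝ) : ℂ) else -((Real.sin (θ/2) : ℝ) : ℂ))
    else (if b = 0 then ((Real.sin (θ/2) : ℝ) : ℂ) else ((Real.cos (θ/2) : ℝ) : ℂ))

/-- Rz(θ) = diag(e^{−iθ/2}, e^{iθ/2}). -/
def RzM (θ : ℝ) : Matrix (ZMod 2) (ZMod 2) ℂ :=
  Matrix.of fun a b =>
    if a = b then
      (if a = 0 then Complex.exp (-(θ/2 : ℝ) * Complex.I) else Complex.exp ((θ/2 : ℝ) * Complex.I))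
    else 0

/-- Hadamard gate. -/
def HM : Matrix (ZMod 2) (ZMod 2) ℂ :=
  Matrix.of fun a b => (1 / ((Real.sqrt 2 : ℝ) : ℂ)) * (if a = 1 ∧ b = 1 then -1 else 1)

/-- T gate = diag(1, e^{iπ/4}). -/
def TM : Matrix (ZMod 2) (ZMod 2) ℂ :=
  Matrix.of fun a b =>
    if a = b then (if a = 0 then 1 else Complex.exp ((Real.pi/4 : ℝ) * Complex.I)) else 0

/-- S gate = diag(1, i). -/
def SM : Matrix (ZMod 2) (ZMod 2) ℂ :=
  Matrix.of fun a b => if a = b then (if a = 0 then 1 else Complex.I) else 0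

/-- S† gate = diag(1, −i). -/
def SdgM : Matrix (ZMod 2) (ZMod 2) ℂ :=
  Matrix.of fun a b => if a = b then (if a = 0 then 1 else -Complex.I) else 0

/-- Pauli X gate. -/
def XM : Matrix (ZMod 2) (ZMod 2) ℂ :=
  Matrix.of fun a b => if a = b then 0 else 1

/-- A single-qubit gate `g` acting on qubit with 0-based index `k`, identity elsewhere. -/
def gate1 {N : ℕ} (g : Matrix (ZMod 2) (ZMod 2) ℂ) (k : Fin N) : QOp N :=
  Matrix.of fun x y => if ∀ j, j ≠ k → x j = y j then g (x k) (y k) else 0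

/-- CZ gate on (0-based) qubits `k`, `l`. -/
def CZg {N : ℕ} (k l : Fin N) : QOp N :=
  Matrix.of fun x y => if x = y then (if x k = 1 ∧ x l = 1 then (-1 : ℂ) else 1) else 0

/-- CNOT gate with control `c` and target `t` (0-based): |y⟩ ↦ |y with bit t replaced by y t + y c⟩. -/
def CNOTg {N : ℕ} (c t : Fin N) : QOp N :=
  Matrix.of fun x y => if x = Function.update y t (y t + y c) then (1 : ℂ) else 0

/-- The `k`-th bit (0-based) of a basis state, `0` when out of range. -/
def bitAt {N : ℕ} (x : QState N) (k : ℕ) : ZMod 2 :=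
  if h : k < N then x ⟨k, h⟩ else 0

/-- Ladder of CZ gates: `∏_{k=1}^{N−1} CZ_{k,k+1}` (all factors commute, so it is
the diagonal matrix with entry `(−1)^{#{adjacent 11 pairs}}`). -/
def ladderCZ (N : ℕ) : QOp N :=
  Matrix.of fun x y =>
    if x = y then
      ∏ k ∈ Finset.range (N - 1), (if bitAt x k = 1 ∧ bitAt x (k + 1) = 1 then (-1 : ℂ) else 1)
    else 0

/-- First CNOT layer of the ladder: simultaneous CNOT_{k+1,k} for 1-based `k ∈ {1,…,N−1}`,
`k ≢ N (mod 2)` (control qubit `k+1`, target qubit `k`; disjoint pairs). -/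
def layer1Map (N : ℕ) (y : QState N) : QState N :=
  fun i => if (i : ℕ) + 1 < N ∧ ((i : ℕ) + 1) % 2 ≠ N % 2 then y i + bitAt y ((i : ℕ) + 1) else y i

/-- Second CNOT layer of the ladder: simultaneous CNOT_{k+1,k} for 1-based `k ∈ {1,…,N−1}`,
`k ≡ N (mod 2)`. -/
def layer2Map (N : ℕ) (y : QState N) : QState N :=
  fun i => if (i : ℕ) + 1 < N ∧ ((i : ℕ) + 1) % 2 = N % 2 then y i + bitAt y ((i : ℕ) + 1) else y i

/-- Ladder of CNOT gates: `L₂ · L₁` with `L₁` applied first. It is a permutation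
matrix of the composed bit-string map. -/
def ladderCNOT (N : ℕ) : QOp N :=
  Matrix.of fun x y => if x = layer2Map N (layer1Map N y) then (1 : ℂ) else 0

/-- Rotation layer `⊗_{k} Rz(β_k)·Ry(α_k)`. -/
def rotYZ {N : ℕ} (α β : Fin N → ℝ) : QOp N :=
  Matrix.of fun x y => ∏ k : Fin N, (RzM (β k) * RyM (α k)) (x k) (y k)

/-- The Ry-Rz-CZ ansatz of depth `M`:
`R_M · Ladder_CZ · R_{M−1} ⋯ Ladder_CZ · R_0` (`R_0` applied first), with
rotation layer `i` using angles `α i`, `β i`. -/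
def ansatzYZ (N : ℕ) (α β : ℕ → Fin N → ℝ) : ℕ → QOp N
  | 0 => rotYZ (α 0) (β 0)
  | (M + 1) => rotYZ (α (M + 1)) (β (M + 1)) * ladderCZ N * ansatzYZ N α β M

/-- Rotation layer `⊗_{k} Ry(α_k)`. -/
def rotY {N : ℕ} (α : Fin N → ℝ) : QOp N :=
  Matrix.of fun x y => ∏ k : Fin N, RyM (α k) (x k) (y k)

/-- The Ry-CNOT ansatz of depth `M`:
`R_M · Ladder_CNOT · R_{M−1} ⋯ Ladder_CNOT · R_0` (`R_0` applied first). -/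
def ansatzY (N : ℕ) (α : ℕ → Fin N → ℝ) : ℕ → QOp N
  | 0 => rotY (α 0)
  | (M + 1) => rotY (α (M + 1)) * ladderCNOT N * ansatzY N α M

/-- Product of CZ gates `CZ_{q,q+1}` (1-based qubits) over all `q` satisfying `P`
(a diagonal matrix, since all CZ's commute). -/
def czLayer (N : ℕ) (P : ℕ → Prop) [DecidablePred P] : QOp N :=
  Matrix.of fun x y =>
    if x = y then
      ∏ p ∈ Finset.range N,
        (if P (p + 1) ∧ bitAt x p = 1 ∧ bitAt x (p + 1) = 1 then (-1 : ℂ) else 1)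
    else 0

/-- Hadamard gates on all 1-based qubits `q` satisfying `P`, identity elsewhere. -/
def hadOn (N : ℕ) (P : ℕ → Prop) [DecidablePred P] : QOp N :=
  Matrix.of fun x y =>
    ∏ k : Fin N, (if P ((k : ℕ) + 1) then HM (x k) (y k) else if x k = y k then (1 : ℂ) else 0)

/-- The circuit `D_k` (1-based qubits, rightmost factor applied first):
`D_{2i} = (∏_{j=1}^{i−1} CZ_{2j,2j+1}) · (∏_{q=2}^{2i} H_q) · (∏_{j=1}^{i} CZ_{2j−1,2j})`,
`D_{2i+1} = (∏_{j=1}^{i} CZ_{2j,2j+1}) · (∏_{q=2}^{2i+1} H_q) · (∏_{j=1}^{i} CZ_{2j−1,2j})`. -/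
def Dgate (N k : ℕ) : QOp N :=
  czLayer N (fun p => p % 2 = 0 ∧ 2 ≤ p ∧ p ≤ k - 1) *
    hadOn N (fun q => 2 ≤ q ∧ q ≤ k) *
    czLayer N (fun p => p % 2 = 1 ∧ p ≤ k - 1)

/-- `U ⊗ I`: the operator acting as `U` on qubits `1,…,N` and identity on `A` ancilla qubits. -/
def embed (N A : ℕ) (U : QOp N) : QOp (N + A) :=
  Matrix.of fun x y =>
    U (fun i => x (Fin.castAdd A i)) (fun i => y (Fin.castAdd A i)) *
      (if ∀ i : Fin A, x (Fin.natAdd N i) = y (Fin.natAdd N i) then (1 : ℂ) else 0)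

end

/-! ### Signed permutation operators -/

/-- The sign `(-1)^c` of a bit `c`. -/
def sgn (c : ZMod 2) : ℂ := if c = 0 then 1 else -1

/-- The signed permutation operator `|y⟩ ↦ (-1)^{f y} |σ y⟩`. -/
def mono {n : ℕ} (σ : QState n → QState n) (f : QState n → ZMod 2) : QOp n :=
  Matrix.of fun x y => if x = σ y then sgn (f y) else 0

theorem zmod2_cases (a : ZMod 2) : a = 0 ∨ a = 1 := by
  revert a; decide

theorem sgn_zero : sgn 0 = 1 := by simp [sgn]

theorem sgn_one : sgn 1 = -1 := by simp [sgn]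

theorem sgn_add (a b : ZMod 2) : sgn (a + b) = sgn a * sgn b := by
  have h2 : (1 + 1 : ZMod 2) = 0 := by decide
  rcases zmod2_cases a with rfl | rfl <;> rcases zmod2_cases b with rfl | rfl <;>
    simp [sgn, h2]

theorem mono_mul {n : ℕ} (σ τ : QState n → QState n) (f g : QState n → ZMod 2) :
    mono σ f * mono τ g = mono (fun y => σ (τ y)) (fun y => f (τ y) + g y) := by
  ext x y
  simp only [mono, Matrix.mul_apply, Matrix.of_apply]
  rw [Finset.sum_eq_single (τ y)]
  · by_cases h : x = σ (τ y) <;> simp [h, sgn_add]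
  · intro b _ hb; simp [hb]
  · simp

theorem mono_one {n : ℕ} : mono (fun y : QState n => y) (fun _ => 0) = 1 := by
  ext x y
  simp [mono, Matrix.one_apply, sgn_zero]

/-! ### The ladder -/

/-- The linear map on bit strings that the CNOT ladder implements. -/
def ladMap (n : ℕ) (y : QState n) : QState n := layer2Map n (layer1Map n y)

theorem ladder_eq_mono (n : ℕ) : ladderCNOT n = mono (ladMap n) (fun _ => 0) := by
  ext x y
  simp [mono, ladderCNOT, ladMap, sgn_zero]

theorem bitAt_lt {n : ℕ} (y : QState n) {i : ℕ} (h : i < n) : bitAt y i = y ⟨i, h⟩ := by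
  simp [bitAt, h]

theorem bitAt_ge {n : ℕ} (y : QState n) {i : ℕ} (h : n ≤ i) : bitAt y i = 0 := by
  simp [bitAt, Nat.not_lt.mpr h]

theorem bitAt_add {n : ℕ} (x y : QState n) (i : ℕ) :
    bitAt (x + y) i = bitAt x i + bitAt y i := by
  unfold bitAt; split_ifs <;> simp

theorem bitAt_ext {n : ℕ} {x y : QState n} (h : ∀ i < n, bitAt x i = bitAt y i) : x = y := by
  funext i
  have := h i i.2
  rwa [bitAt_lt _ i.2, bitAt_lt _ i.2] at this

theorem bitAt_layer1 {n : ℕ} (y : QState n) (i : ℕ) : bitAt (layer1Map n y) i =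
    if (i + 1) % 2 ≠ n % 2 then bitAt y i + bitAt y (i + 1) else bitAt y i := by
  by_cases h : i < n
  · rw [bitAt_lt _ h, bitAt_lt _ h]
    by_cases h' : i + 1 < n
    · simp [layer1Map, h']
    · simp [layer1Map, h', bitAt_ge y (Nat.not_lt.mp h')]
  · have h := Nat.not_lt.mp h
    simp [bitAt_ge _ h, bitAt_ge _ (Nat.le_succ_of_le h)]

theorem bitAt_layer2 {n : ℕ} (y : QState n) (i : ℕ) : bitAt (layer2Map n y) i =
    if (i + 1) % 2 = n % 2 then bitAt y i + bitAt y (i + 1) else bitAt y i := by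
  by_cases h : i < n
  · rw [bitAt_lt _ h, bitAt_lt _ h]
    by_cases h' : i + 1 < n
    · simp [layer2Map, h']
    · simp [layer2Map, h', bitAt_ge y (Nat.not_lt.mp h')]
  · have h := Nat.not_lt.mp h
    simp [bitAt_ge _ h, bitAt_ge _ (Nat.le_succ_of_le h)]

theorem bitAt_lad {n : ℕ} (y : QState n) (i : ℕ) : bitAt (ladMap n y) i =
    bitAt y i + bitAt y (i + 1) + if (i + 1) % 2 = n % 2 then bitAt y (i + 2) else 0 := by
  unfold ladMap
  rw [bitAt_layer2, bitAt_layer1, bitAt_layer1]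
  by_cases h : (i + 1) % 2 = n % 2
  · have h2 : (i + 1 + 1) % 2 ≠ n % 2 := by omega
    rw [if_pos h, if_neg (not_not.mpr h), if_pos h2, if_pos h]
    exact (add_assoc _ _ _).symm
  · simp [h]

theorem ladMap_add {n : ℕ} (x y : QState n) : ladMap n (x + y) = ladMap n x + ladMap n y := by
  apply bitAt_ext
  intro i _
  simp only [bitAt_add, bitAt_lad]
  split_ifs <;> ring

theorem ladMap_smul {n : ℕ} (c : ZMod 2) (y : QState n) : ladMap n (c • y) = c • ladMap n y := by
  rcases zmod2_cases c with rfl | rfl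
  · have h := ladMap_add (0 : QState n) 0
    simp only [add_zero] at h
    simpa using h
  · simp

/-- `ladMap` as an element of the endomorphism ring, where it is unipotent. -/
def ladLin (n : ℕ) : Module.End (ZMod 2) (QState n) where
  toFun := ladMap n
  map_add' := ladMap_add
  map_smul' := ladMap_smul

theorem end_two {n : ℕ} (f : Module.End (ZMod 2) (QState n)) : f + f = 0 := by
  ext1; ext; simp [CharTwo.add_self_eq_zero]

/-- The nilpotent part of the ladder strictly lowers the qubit index. -/
theorem nil_pow (n k : ℕ) (y : QState n) (i : ℕ) (h : n ≤ i + k) :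
    bitAt (((ladLin n + 1) ^ k) y) i = 0 := by
  induction k generalizing i with
  | zero => exact bitAt_ge _ h
  | succ k ih =>
    rw [pow_succ']
    simp only [Module.End.mul_apply, LinearMap.add_apply, Module.End.one_apply]
    set z := ((ladLin n + 1) ^ k) y
    change bitAt (ladMap n z + z) i = 0
    rw [bitAt_add, bitAt_lad, ih (i + 1) (by omega), ih (i + 2) (by omega)]
    simp [CharTwo.add_self_eq_zero]

/-- The Frobenius identity for `f + 1`, written out because the endomorphism ring is not
commutative. -/
theorem one_add_pow (n m : ℕ) (f : Module.End (ZMod 2) (QState n)) :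
    (f + 1) ^ 2 ^ m = f ^ 2 ^ m + 1 := by
  induction m with
  | zero => simp
  | succ m ih =>
    rw [pow_succ, pow_mul, pow_mul, ih, sq, sq]
    have := end_two (f ^ 2 ^ m)
    calc (f ^ 2 ^ m + 1) * (f ^ 2 ^ m + 1)
        = f ^ 2 ^ m * f ^ 2 ^ m + (f ^ 2 ^ m + f ^ 2 ^ m) + 1 := by noncomm_ring
      _ = _ := by rw [this, add_zero]

theorem ladLin_pow (n m : ℕ) (h : n ≤ 2 ^ m) : ladLin n ^ 2 ^ m = 1 := by
  have h0 : (ladLin n + 1) ^ 2 ^ m = 0 := by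
    ext1
    refine LinearMap.ext fun y => bitAt_ext fun i _ => ?_
    simp only [LinearMap.comp_apply]
    rw [nil_pow _ _ _ _ (by omega)]
    simp [bitAt]
  rw [one_add_pow] at h0
  calc ladLin n ^ 2 ^ m = ladLin n ^ 2 ^ m + (1 + 1) := by rw [end_two, add_zero]
    _ = 1 := by rw [← add_assoc, h0, zero_add]

theorem ladder_pow_eq (n k : ℕ) :
    ladderCNOT n ^ k = mono (fun y => (ladLin n ^ k) y) (fun _ => 0) := by
  induction k with
  | zero => simpa using mono_one.symm
  | succ k ih =>
    rw [pow_succ', ih, ladder_eq_mono, mono_mul, pow_succ']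
    simp [Module.End.mul_apply, ladLin]

/-- The ladder has order dividing every power of two that is at least `n`. -/
theorem ladder_pow (n m : ℕ) (h : n ≤ 2 ^ m) : ladderCNOT n ^ 2 ^ m = 1 := by
  rw [ladder_pow_eq, ladLin_pow n m h]
  simpa using mono_one

/-! ### Reachable operators -/

theorem RyM_mul (a b : ℝ) : RyM a * RyM b = RyM (a + b) := by
  have e : ((a + b) / 2 : ℝ) = a / 2 + b / 2 := by ring
  ext x y
  rw [Matrix.mul_apply]
  have hs : ∀ f : ZMod 2 → ℂ, ∑ i, f i = f 0 + f 1 := fun f => Fin.sum_univ_two f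
  rw [hs]
  rcases zmod2_cases x with rfl | rfl <;> rcases zmod2_cases y with rfl | rfl <;>
    simp [RyM, e, Complex.cos_add, Complex.sin_add] <;> ring

theorem rotY_mul {n : ℕ} (a b : Fin n → ℝ) : rotY a * rotY b = rotY (a + b) := by
  ext x y
  simp only [rotY, Matrix.mul_apply, Matrix.of_apply, Pi.add_apply, ← RyM_mul,
    Finset.prod_univ_sum, Fintype.piFinset_univ, Finset.prod_mul_distrib]

theorem RyM_zero : RyM 0 = 1 := by
  ext x y
  rcases zmod2_cases x with rfl | rfl <;> rcases zmod2_cases y with rfl | rfl <;> simp [RyM]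

theorem rotY_zero {n : ℕ} : rotY (0 : Fin n → ℝ) = 1 := by
  ext x y
  simp only [rotY, Matrix.of_apply, Pi.zero_apply, RyM_zero, Matrix.one_apply]
  by_cases h : x = y
  · simp [h]
  · rw [if_neg h]
    obtain ⟨i, hi⟩ := Function.ne_iff.mp h
    exact Finset.prod_eq_zero (Finset.mem_univ i) (if_neg hi)

/-- `U` is an ansatz circuit of depth `M`. -/
def Circ (n M : ℕ) (U : QOp n) : Prop := ∃ α, ansatzY n α M = U

theorem ansatzY_congr {n : ℕ} (α β : ℕ → Fin n → ℝ) (M : ℕ) (h : ∀ i ≤ M, α i = β i) :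
    ansatzY n α M = ansatzY n β M := by
  induction M with
  | zero => simp [ansatzY, h 0 le_rfl]
  | succ M ih =>
    simp only [ansatzY]
    rw [ih fun i hi => h i (by omega), h (M + 1) le_rfl]

theorem Circ.one {n : ℕ} : Circ n 0 1 := ⟨fun _ => 0, rotY_zero⟩

theorem Circ.rot {n M : ℕ} {U : QOp n} (β : Fin n → ℝ) (h : Circ n M U) :
    Circ n M (rotY β * U) := by
  obtain ⟨α, rfl⟩ := h
  cases M with
  | zero => exact ⟨fun _ => β + α 0, by simp [ansatzY, rotY_mul]⟩
  | succ M =>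
    refine ⟨Function.update α (M + 1) (β + α (M + 1)), ?_⟩
    simp only [ansatzY, Function.update_self]
    rw [ansatzY_congr (Function.update α (M + 1) (β + α (M + 1))) α M
      fun i hi => Function.update_of_ne (by omega) _ _, ← rotY_mul]
    simp only [mul_assoc]

theorem Circ.lad {n M : ℕ} {U : QOp n} (h : Circ n M U) : Circ n (M + 1) (ladderCNOT n * U) := by
  obtain ⟨α, rfl⟩ := h
  refine ⟨Function.update α (M + 1) 0, ?_⟩
  simp only [ansatzY, Function.update_self, rotY_zero, one_mul]
  rw [ansatzY_congr _ α M fun i hi => Function.update_of_ne (by omega) _ _]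

/-- `U` becomes an ansatz circuit of depth `m` once the `m` ladders that such a circuit contains
are applied after it; this is the interaction picture with the ladder as free evolution. -/
def Reach (n m : ℕ) (U : QOp n) : Prop := Circ n m (ladderCNOT n ^ m * U)

theorem Reach.one {n : ℕ} : Reach n 0 1 := by
  simpa [Reach] using Circ.one

theorem Reach.mono {n m m' : ℕ} {U : QOp n} (h : Reach n m U) (hm : m ≤ m') : Reach n m' U := by
  induction hm with
  | refl => exact h
  | step _ ih =>
    have := ih.lad
    rwa [← mul_assoc, ← pow_succ'] at this

/-- In the interaction picture a rotation at time `m` is conjugated by the `m`-th ladder power. -/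
theorem Reach.rot {n m : ℕ} {U G : QOp n} (β : Fin n → ℝ) (h : Reach n m U)
    (hG : ladderCNOT n ^ m * G = rotY β * ladderCNOT n ^ m) : Reach n m (G * U) := by
  unfold Reach
  rw [← mul_assoc, hG, mul_assoc]
  exact Circ.rot β h

/-- The times at which rotations are placed: with `D` the period of the ladder, phase `c` stands
for the times `0, 1, D - 1` modulo `D` according to `c % 3`. -/
def tm (D c : ℕ) : ℕ := D * (c / 3) + (if c % 3 = 0 then 0 else if c % 3 = 1 then 1 else D - 1)

theorem tm_mono (D : ℕ) (hD : 2 ≤ D) : Monotone (tm D) := by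
  refine monotone_nat_of_le_succ fun c => ?_
  unfold tm
  have h : c % 3 = 0 ∨ c % 3 = 1 ∨ c % 3 = 2 := by omega
  rcases h with h | h | h
  · have h1 : (c + 1) % 3 = 1 := by omega
    have h2 : (c + 1) / 3 = c / 3 := by omega
    simp [h, h1, h2]
  · have h1 : (c + 1) % 3 = 2 := by omega
    have h2 : (c + 1) / 3 = c / 3 := by omega
    simp [h, h1, h2]; omega
  · have h1 : (c + 1) % 3 = 0 := by omega
    have h2 : (c + 1) / 3 = c / 3 + 1 := by omega
    simp [h, h1, h2, mul_add]

theorem tm_three_mul (D r : ℕ) : tm D (3 * r) = D * r := by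
  simp [tm]

/-- `G` is the rotation layer `R` moved to the time class `τ`: it is `R` itself at times `≡ 0`,
`L⁻¹ R L` at times `≡ 1` and `L R L⁻¹` at times `≡ -1`, where `L` is the ladder. -/
def Moved {n : ℕ} (τ : Fin 3) (G R : QOp n) : Prop :=
  if τ = 0 then G = R
  else if τ = 1 then ladderCNOT n * G = R * ladderCNOT n
  else G * ladderCNOT n = ladderCNOT n * R

/-- At the time of phase `c` any rotation moved to the time class `c % 3` can be applied. -/
theorem Reach.moved {n D c : ℕ} {U G : QOp n} {τ : Fin 3} (hD : 2 ≤ D)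
    (hL : ladderCNOT n ^ D = 1) (β : Fin n → ℝ) (h : Reach n (tm D c) U)
    (hG : Moved τ G (rotY β)) (hc : c % 3 = τ) : Reach n (tm D c) (G * U) := by
  refine h.rot β ?_
  have hp : ladderCNOT n ^ (D * (c / 3)) = 1 := by rw [pow_mul, hL, one_pow]
  unfold tm
  rw [pow_add, hp, one_mul, hc]
  unfold Moved at hG
  fin_cases τ
  · simpa using hG
  · simpa using hG
  · simp only [Fin.reduceFinMk, Fin.reduceEq, if_false] at hG
    simp only [show ((2 : ℕ) = 0) = False by simp, show ((2 : ℕ) = 1) = False by simp, if_false]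
    have e1 : ladderCNOT n * ladderCNOT n ^ (D - 1) = 1 := by
      rw [← pow_succ', Nat.sub_add_cancel (by omega), hL]
    have e2 : ladderCNOT n ^ (D - 1) * ladderCNOT n = 1 := by
      rw [← pow_succ, Nat.sub_add_cancel (by omega), hL]
    calc ladderCNOT n ^ (D - 1) * G
        = ladderCNOT n ^ (D - 1) * (G * ladderCNOT n) * ladderCNOT n ^ (D - 1) := by
          rw [mul_assoc, mul_assoc, e1, mul_one]
      _ = _ := by rw [hG, ← mul_assoc, e2, one_mul]

/-! ### Pauli operators on a window of qubits -/

/-- Symbolic signed Pauli strings `(s, a, b)`, standing for `(-1)^s X^a Z^b` near a base qubit `p`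
(zero-based): bit `x` of `a` is the exponent of `X` on qubit `p + x - 2`, and bit `z` of `b` that of
`Z` on qubit `p + z`. Exponents of qubits outside the circuit are ignored by `PauliW.op`. -/
abbrev PauliW := ZMod 2 × (Fin 7 → ZMod 2) × (Fin 7 → ZMod 2)

/-- The product of Pauli strings: moving `Z^b` past `X^a'` gives a sign for each qubit of the common
window `p, …, p + 4`. -/
def pmul (g h : PauliW) : PauliW :=
  (g.1 + h.1 + (g.2.2 0 * h.2.1 2 + g.2.2 1 * h.2.1 3 + g.2.2 2 * h.2.1 4 + g.2.2 3 * h.2.1 5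
    + g.2.2 4 * h.2.1 6), g.2.1 + h.2.1, g.2.2 + h.2.2)

/-- The Pauli string with the opposite sign. -/
def pneg (g : PauliW) : PauliW := (g.1 + 1, g.2)

/-- The bit string flipped by `X^a`. -/
def xvec (n p : ℕ) (a : Fin 7 → ZMod 2) : QState n :=
  fun i => ∑ x : Fin 7, if (i : ℕ) + 2 = p + x then a x else 0

/-- The parity measured by `Z^b`. -/
def zform {n : ℕ} (p : ℕ) (b : Fin 7 → ZMod 2) (y : QState n) : ZMod 2 :=
  ∑ z : Fin 7, b z * bitAt y (p + z)

/-- The operator denoted by a symbolic Pauli string. -/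
def PauliW.op (n p : ℕ) (g : PauliW) : QOp n :=
  mono (fun y => y + xvec n p g.2.1) (fun y => g.1 + zform p g.2.2 y)

theorem xvec_add (n p : ℕ) (a a' : Fin 7 → ZMod 2) :
    xvec n p (a + a') = xvec n p a + xvec n p a' := by
  funext i
  simp only [xvec, Pi.add_apply, ← Finset.sum_add_distrib]
  refine Finset.sum_congr rfl fun x _ => ?_
  split_ifs <;> simp

theorem zform_add_left {n : ℕ} (p : ℕ) (b b' : Fin 7 → ZMod 2) (y : QState n) :
    zform p (b + b') y = zform p b y + zform p b' y := by
  simp only [zform, Pi.add_apply, ← Finset.sum_add_distrib, add_mul]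

theorem zform_add_right {n : ℕ} (p : ℕ) (b : Fin 7 → ZMod 2) (y y' : QState n) :
    zform p b (y + y') = zform p b y + zform p b y' := by
  simp only [zform, bitAt_add, ← Finset.sum_add_distrib, mul_add]

theorem bitAt_xvec {n p i : ℕ} (a : Fin 7 → ZMod 2) (h : i < n) :
    bitAt (xvec n p a) i = ∑ x : Fin 7, if i + 2 = p + x then a x else 0 := by
  rw [bitAt_lt _ h]; rfl

theorem zform_xvec {n p : ℕ} (hp : p + 5 < n) (a b : Fin 7 → ZMod 2) :
    zform p b (xvec n p a) = b 0 * a 2 + b 1 * a 3 + b 2 * a 4 + b 3 * a 5 + b 4 * a 6 := by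
  have h6 : bitAt (xvec n p a) (p + 6) = 0 := by
    by_cases h : p + 6 < n
    · rw [bitAt_xvec a h]
      refine Finset.sum_eq_zero fun x _ => if_neg ?_
      have := x.2; omega
    · exact bitAt_ge _ (by omega)
  have hb : ∀ z : ℕ, z ≤ 5 → bitAt (xvec n p a) (p + z) =
      ∑ x : Fin 7, if z + 2 = (x : ℕ) then a x else 0 := by
    intro z hz
    rw [bitAt_xvec a (by omega)]
    refine Finset.sum_congr rfl fun x _ => ?_
    simp only [add_assoc, Nat.add_left_cancel_iff]
  have h0 := hb 0 (by omega)
  have h1 := hb 1 (by omega)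
  have h2 := hb 2 (by omega)
  have h3 := hb 3 (by omega)
  have h4 := hb 4 (by omega)
  have h5 := hb 5 (by omega)
  simp [Fin.sum_univ_seven] at h0 h1 h2 h3 h4 h5
  simp [zform, Fin.sum_univ_seven, h0, h1, h2, h3, h4, h5, h6]

theorem op_mul {n p : ℕ} (hp : p + 5 < n) (g h : PauliW) :
    g.op n p * h.op n p = (pmul g h).op n p := by
  unfold PauliW.op
  rw [mono_mul]
  congr 1
  · funext y; simp only [pmul, xvec_add]; abel
  · funext y
    simp only [pmul, zform_add_left, zform_add_right, zform_xvec hp]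
    abel

theorem mono_neg {n : ℕ} (σ : QState n → QState n) (f : QState n → ZMod 2) :
    mono σ (fun y => f y + 1) = -mono σ f := by
  ext x y
  simp only [mono, Matrix.of_apply, Matrix.neg_apply, sgn_add, sgn_one]
  split_ifs <;> simp

theorem op_neg (n p : ℕ) (g : PauliW) : (pneg g).op n p = -g.op n p := by
  unfold PauliW.op
  rw [← mono_neg]
  congr 1
  funext y
  exact add_right_comm _ _ _

theorem op_one (n p : ℕ) : PauliW.op n p (0, 0, 0) = 1 := by
  rw [← mono_one]
  unfold PauliW.op
  congr 1
  · funext y i; simp [xvec]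
  · funext y; simp [zform]

/-! ### The available generators -/

/-- Whether the inward (`X`) tail of a moved `Y` has length two; otherwise its `Z` tail has.
This depends on the layer of the ladder that targets the qubit and on the direction of time. -/
def wide (par : Bool) (w : Fin 5) (τ : Fin 3) : Bool :=
  ((w : ℕ) % 2 == if par then 1 else 0) == (τ == 2)

/-- The Pauli string of `Ry` on qubit `p + w`, moved to time class `τ`. The flag `par` says whether
`p + 1` and the number of qubits have different parities. -/
def gen (par : Bool) (w : Fin 5) (τ : Fin 3) : PauliW :=
  (0,
    fun x => if (x : ℕ) = w + 2 ∨ τ ≠ 0 ∧ ((x : ℕ) = w + 1 ∨ wide par w τ ∧ (x : ℕ) = w)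
      then 1 else 0,
    fun z => if (z : ℕ) = w ∨ τ ≠ 0 ∧ ((z : ℕ) = w + 1 ∨ ¬ wide par w τ ∧ (z : ℕ) = w + 2)
      then 1 else 0)

theorem sum_indicator (P : ℕ → Prop) [DecidablePred P] (p i : ℕ) (hP : ∀ x, P x → x < 7) :
    (∑ x : Fin 7, if i = p + x then (if P x then (1 : ZMod 2) else 0) else 0) =
      if p ≤ i ∧ P (i - p) then 1 else 0 := by
  by_cases h : p ≤ i ∧ P (i - p)
  · rw [if_pos h, Finset.sum_eq_single ⟨i - p, hP _ h.2⟩]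
    · simp [h.1, h.2]
    · intro x _ hx
      rw [if_neg]
      rintro rfl
      apply hx; ext; simp
    · simp
  · rw [if_neg h]
    refine Finset.sum_eq_zero fun x _ => ?_
    by_cases h1 : i = p + x
    · subst h1
      have : ¬ P x := fun h2 => h ⟨by omega, by simpa using h2⟩
      simp [this]
    · simp [h1]

theorem bitAt_gen {n p : ℕ} (par : Bool) (w : Fin 5) (τ : Fin 3) (i : ℕ) :
    bitAt (xvec n p (gen par w τ).2.1) i =
      if i < n ∧ (i = p + w ∨ τ ≠ 0 ∧ (i + 1 = p + w ∨ wide par w τ ∧ i + 2 = p + w))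
        then 1 else 0 := by
  have hw := w.2
  by_cases h : i < n
  · rw [bitAt_xvec _ h]
    simp only [gen]
    rw [sum_indicator (fun x => x = w + 2 ∨ τ ≠ 0 ∧ (x = w + 1 ∨ wide par w τ ∧ x = w)) p (i + 2)
      (by intro x hx; omega)]
    congr 1
    simp only [h, true_and, eq_iff_iff]
    generalize (wide par w τ = true) = W
    generalize (τ ≠ 0) = T
    by_cases W <;> by_cases T <;> simp only [*, true_and, false_and, or_false] <;> omega
  · rw [bitAt_ge _ (by omega), if_neg (fun h' => h h'.1)]

theorem zform_gen {n p : ℕ} (par : Bool) (w : Fin 5) (τ : Fin 3) (y : QState n) :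
    zform p (gen par w τ).2.2 y = bitAt y (p + w) + if τ ≠ 0 then bitAt y (p + w + 1) +
      (if wide par w τ then 0 else bitAt y (p + w + 2)) else 0 := by
  simp only [gen, zform, Fin.sum_univ_seven]
  generalize wide par w τ = W
  by_cases hτ : τ = 0 <;> cases W <;> fin_cases w <;> simp [hτ, add_assoc]

/-- The quarter turn `(1 + P)/√2` about `P`, where `P² = -1`. The rotation `Ry(±π/2)` is the one
about `± X Z`. -/
noncomputable def ehalf {n : ℕ} (P : QOp n) : QOp n := (((Real.sqrt 2 : ℝ) : ℂ)⁻¹) • (1 + P)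

/-- The angle whose sign is given by a bit. -/
noncomputable def ang (s : ZMod 2) : ℝ := if s = 0 then Real.pi / 2 else -(Real.pi / 2)

theorem RyM_ang (s a b : ZMod 2) : RyM (ang s) a b =
    ((Real.sqrt 2 : ℝ) : ℂ)⁻¹ *
      ((if a = b then 1 else 0) + if a = b + 1 then sgn (s + b) else 0) := by
  have e : Real.pi / 2 / 2 = Real.pi / 4 := by ring
  have hq : ((Real.sqrt 2 : ℝ) : ℂ) / 2 = ((Real.sqrt 2 : ℝ) : ℂ)⁻¹ := by
    have h0 : ((Real.sqrt 2 : ℝ) : ℂ) ≠ 0 := by simp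
    have h1 : ((Real.sqrt 2 : ℝ) : ℂ) * ((Real.sqrt 2 : ℝ) : ℂ) = 2 := by
      rw [← Complex.ofReal_mul, Real.mul_self_sqrt (by norm_num)]; norm_num
    field_simp
    rw [sq, h1]
  have h11 : (1 + 1 : ZMod 2) = 0 := by decide
  have hc : ((Real.cos (Real.pi / 4) : ℝ) : ℂ) = ((Real.sqrt 2 : ℝ) : ℂ)⁻¹ := by
    rw [Real.cos_pi_div_four, ← hq]; push_cast; rfl
  have hs : ((Real.sin (Real.pi / 4) : ℝ) : ℂ) = ((Real.sqrt 2 : ℝ) : ℂ)⁻¹ := by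
    rw [Real.sin_pi_div_four, ← hq]; push_cast; rfl
  rcases zmod2_cases s with rfl | rfl <;> rcases zmod2_cases a with rfl | rfl <;>
    rcases zmod2_cases b with rfl | rfl <;>
    simp only [RyM, ang, Matrix.of_apply, if_true, one_ne_zero, if_false, neg_div, e,
      Real.cos_neg, Real.sin_neg, Complex.ofReal_neg, hc, hs, h11, sgn_zero, sgn_one, add_zero,
      zero_add, zero_ne_one] <;> simp

theorem rot_eq {n : ℕ} (k : Fin n) (s : ZMod 2) : rotY (Pi.single k (ang s)) =
    ehalf (mono (fun y => y + Pi.single k 1) (fun y => s + y k)) := by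
  ext x y
  simp only [rotY, Matrix.of_apply, ehalf, Matrix.smul_apply, Matrix.add_apply, Matrix.one_apply,
    mono, smul_eq_mul]
  rw [← Finset.mul_prod_erase _ _ (Finset.mem_univ k), Pi.single_eq_same, RyM_ang]
  by_cases h : ∀ i, i ≠ k → x i = y i
  · rw [Finset.prod_eq_one, mul_one]
    · have e1 : x = y ↔ x k = y k := ⟨fun h => h ▸ rfl, fun hk => funext fun i => by
        by_cases hi : i = k
        · rw [hi, hk]
        · exact h i hi⟩
      have e2 : x = y + Pi.single k 1 ↔ x k = y k + 1 := ⟨fun h => by simp [h], fun hk =>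
        funext fun i => by
          by_cases hi : i = k
          · subst hi; simp [hk]
          · simp [hi, h i hi]⟩
      simp only [e1, e2]
    · intro i hi
      have hi := Finset.ne_of_mem_erase hi
      rw [Pi.single_eq_of_ne hi, RyM_zero, h i hi, Matrix.one_apply_eq]
  · push Not at h
    obtain ⟨i, hi, hxy⟩ := h
    rw [Finset.prod_eq_zero (Finset.mem_erase.mpr ⟨hi, Finset.mem_univ i⟩), mul_zero,
      if_neg (fun h => hxy (congrFun h i)), if_neg, add_zero, mul_zero]
    · rintro rfl
      exact hxy (by simp [hi])
    · rw [Pi.single_eq_of_ne hi, RyM_zero, Matrix.one_apply_ne hxy]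

theorem Moved.ehalf {n : ℕ} {τ : Fin 3} {G R : QOp n} (h : Moved τ G R) :
    Moved τ (ehalf G) (ehalf R) := by
  unfold Moved at *
  split_ifs at * with h0 h1
  · rw [h]
  · simp only [_root_.ehalf, mul_smul_comm, smul_mul_assoc, mul_add, add_mul, h, mul_one, one_mul]
  · simp only [_root_.ehalf, mul_smul_comm, smul_mul_assoc, mul_add, add_mul, h, mul_one, one_mul]

/-- A generator with a choice of sign. -/
def sgen (par : Bool) (s : ZMod 2) (w : Fin 5) (τ : Fin 3) : PauliW := (s, (gen par w τ).2)

/-- If bit `q` is moved back by the inverse of the ladder, it spreads to the bits `q`, `q - 1` and,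
when `q` is not a target of the second layer, `q - 2`: applying the ladder to the spread bits
returns bit `q`. -/
theorem lad_tail_inv (q n i : ℕ) (W : Bool) (hk : q < n)
    (hW : W = true ↔ ¬ (q + 1) % 2 = n % 2) :
    ((if i < n ∧ (i = q ∨ i + 1 = q ∨ W = true ∧ i + 2 = q) then (1 : ZMod 2) else 0) +
        (if i + 1 < n ∧ (i + 1 = q ∨ i + 1 + 1 = q ∨ W = true ∧ i + 1 + 2 = q) then 1 else 0) +
        if (i + 1) % 2 = n % 2 then
          if i + 2 < n ∧ (i + 2 = q ∨ i + 2 + 1 = q ∨ W = true ∧ i + 2 + 2 = q) then 1 else 0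
        else 0) = if i = q then 1 else 0 := by
  cases W <;> simp only [Bool.false_eq_true, false_iff, not_not, true_iff, false_and, or_false,
    true_and] at hW ⊢ <;> split_ifs <;> first | decide | (exfalso; omega)

/-- The ladder spreads bit `q` to the bits `q`, `q - 1` and, when `q` is a target position of the
second layer, `q - 2`. -/
theorem lad_tail (q n i : ℕ) (W : Bool) (hi : i < n)
    (hW : W = true ↔ (q + 1) % 2 = n % 2) :
    ((if i = q then (1 : ZMod 2) else 0) + (if i + 1 = q then 1 else 0) +
        if (i + 1) % 2 = n % 2 then if i + 2 = q then 1 else 0 else 0) =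
      if i < n ∧ (i = q ∨ i + 1 = q ∨ W = true ∧ i + 2 = q) then 1 else 0 := by
  cases W <;> simp only [Bool.false_eq_true, false_iff, true_iff, false_and, or_false,
    true_and] at hW ⊢ <;> split_ifs <;> first | decide | (exfalso; omega)

/-- `gen` computes the moved rotations: conjugating `X Z` on qubit `p + w` by the ladder turns the
flipped bit into its image under the linear map (or its inverse), and the measured bit into the
pulled-back linear form. -/
theorem moved_gen {n p : ℕ} (hp : p + 5 < n) (par : Bool)
    (hpar : (p + 1) % 2 = (n + if par then 1 else 0) % 2) (s : ZMod 2) (w : Fin 5) (τ : Fin 3) :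
    Moved τ (ehalf ((sgen par s w τ).op n p))
      (rotY (Pi.single ⟨p + w, by omega⟩ (ang s))) := by
  rw [rot_eq]
  apply Moved.ehalf
  have hk : p + w < n := by omega
  set k : Fin n := ⟨p + w, hk⟩ with hkdef
  have hbk : ∀ y : QState n, y k = bitAt y (p + w) := fun y => (bitAt_lt y hk).symm
  have hbs : ∀ i, bitAt (Pi.single k 1 : QState n) i = if i = p + w then 1 else 0 := by
    intro i
    by_cases hi : i < n
    · rw [bitAt_lt _ hi]
      by_cases h : i = p + w
      · subst h; simp [hkdef]
      · rw [Pi.single_eq_of_ne, if_neg h]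
        intro h'; exact h (congrArg Fin.val h')
    · rw [bitAt_ge _ (by omega), if_neg (by omega)]
  have hW : τ ≠ 0 → ((wide par w τ = true) ↔ ((p + w + 1) % 2 = n % 2 ↔ τ = 2)) := by
    intro _
    have : ((w : ℕ) % 2 = if par then 1 else 0) ↔ (p + w + 1) % 2 = n % 2 := by
      cases par <;> simp at hpar ⊢ <;> omega
    rw [← this]
    simp [wide, beq_eq_beq]
  unfold Moved PauliW.op
  have h3 : τ = 0 ∨ τ = 1 ∨ τ = 2 := by
    clear hW
    revert τ; decide
  rcases h3 with rfl | rfl | rfl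
  · simp only [if_true]
    congr 1
    · funext y
      refine congrArg (y + ·) (bitAt_ext fun i hi => ?_)
      simp only [sgen]
      rw [bitAt_gen, hbs]
      simp [hi]
    · funext y
      simp only [sgen]
      rw [zform_gen, hbk y]; simp
  · simp only [one_ne_zero, if_false, if_true]
    rw [ladder_eq_mono, mono_mul, mono_mul]
    have hW := hW (by decide)
    congr 1
    · funext y
      rw [ladMap_add]
      refine congrArg (ladMap n y + ·) (bitAt_ext fun i hi => ?_)
      simp only [sgen]
      rw [bitAt_lad, bitAt_gen, bitAt_gen, bitAt_gen, hbs]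
      simpa only [ne_eq, one_ne_zero, not_false_eq_true, true_and] using
        lad_tail_inv (p + w) n i _ hk (by simpa using hW)
    · funext y
      simp only [sgen, zero_add, add_zero]
      rw [zform_gen, hbk (ladMap n y), bitAt_lad]
      simp only [ne_eq, one_ne_zero, not_false_eq_true, if_true]
      by_cases h : (p + w + 1) % 2 = n % 2 <;> simp_all [add_assoc]
  · simp only [Fin.reduceEq, if_false]
    rw [ladder_eq_mono, mono_mul, mono_mul]
    have hW := hW (by decide)
    congr 1
    · funext y
      rw [ladMap_add]
      refine congrArg (ladMap n y + ·) (bitAt_ext fun i hi => ?_)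
      simp only [sgen]
      rw [bitAt_lad, bitAt_gen, hbs, hbs, hbs]
      symm
      simpa only [ne_eq, Fin.reduceEq, not_false_eq_true, true_and] using
        lad_tail (p + w) n i _ hi (by simpa using hW)
    · funext y
      simp only [sgen, zero_add, add_zero]
      rw [zform_gen, hbk y, bitAt_lad, bitAt_lad, bitAt_lad]
      simp only [ne_eq, Fin.reduceEq, not_false_eq_true, if_true, iff_true] at hW ⊢
      have e2 : p + (w : ℕ) + 1 + 1 = p + w + 2 := rfl
      have e3 : p + (w : ℕ) + 1 + 2 = p + w + 3 := rfl
      have e3' : p + (w : ℕ) + 2 + 1 = p + w + 3 := rfl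
      by_cases h : (p + w + 1) % 2 = n % 2
      · have h' : ¬ (p + w + 1 + 1) % 2 = n % 2 := by omega
        rw [if_pos h, if_neg h', if_pos (hW.mpr h), e2]
        refine congrArg (s + ·) ?_
        generalize bitAt y (p + w) = a
        generalize bitAt y (p + w + 1) = b
        generalize bitAt y (p + w + 2) = c
        revert a b c; decide
      · have h' : (p + w + 1 + 1) % 2 = n % 2 := by omega
        have h'' : ¬ (p + w + 2 + 1) % 2 = n % 2 := by omega
        rw [if_neg h, if_pos h', if_neg (fun h1 => h (hW.mp h1)), if_neg h'', e2, e3, e3']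
        refine congrArg (s + ·) ?_
        generalize bitAt y (p + w) = a
        generalize bitAt y (p + w + 1) = b
        generalize bitAt y (p + w + 2) = c
        generalize bitAt y (p + w + 3) = d
        revert a b c d; decide

/-! ### Words of generators -/

/-- A gate `(s, w, τ)`: the rotation by `±π/2` (sign `s`) on qubit `p + w` in time class `τ`. -/
abbrev Gate := ZMod 2 × Fin 5 × Fin 3

/-- The Pauli string that generates a gate. -/
def Gate.str (par : Bool) (g : Gate) : PauliW := sgen par g.1 g.2.1 g.2.2

/-- The operator of a gate in the interaction picture. -/
noncomputable def Gate.op (n p : ℕ) (par : Bool) (g : Gate) : QOp n :=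
  ehalf ((g.str par).op n p)

/-- The inverse gate, which rotates by the opposite angle. -/
def Gate.inv (g : Gate) : Gate := (g.1 + 1, g.2)

/-- The product of a word of gates; the last one acts first. -/
noncomputable def wordOp (n p : ℕ) (par : Bool) (l : List Gate) : QOp n :=
  (l.map (Gate.op n p par)).prod

/-- The first phase by which all gates of the word can have acted, each one in its time class. -/
def phase : List Gate → ℕ
  | [] => 0
  | g :: l => phase l + ((g.2.2 : ℕ) + 3 - phase l % 3) % 3

/-- Every word of gates is reachable by the time of its phase. -/
theorem reach_word {n p D : ℕ} (hp : p + 5 < n) (hD : 2 ≤ D) (hL : ladderCNOT n ^ D = 1)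
    (par : Bool) (hpar : (p + 1) % 2 = (n + if par then 1 else 0) % 2) (l : List Gate) :
    Reach n (tm D (phase l)) (wordOp n p par l) := by
  induction l with
  | nil => simpa [wordOp, phase, tm] using Reach.one (n := n)
  | cons g l ih =>
    have h2 := g.2.2.2
    refine (ih.mono (tm_mono D hD (Nat.le_add_right _ _))).moved hD hL _
      (moved_gen hp par hpar g.1 g.2.1 g.2.2) ?_
    simp only [phase]
    omega

/-- At multiples of the period the interaction picture agrees with the circuit itself. -/
theorem exists_of_reach {n D r : ℕ} (hL : ladderCNOT n ^ D = 1) {U : QOp n}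
    (h : Reach n (D * r) U) : ∃ α, ansatzY n α (D * r) = U := by
  unfold Reach at h
  rwa [pow_mul, hL, one_pow, one_mul] at h

/-- The word `l₁ ⋯ l_d g l_d⁻¹ ⋯ l₁⁻¹`. -/
def conjWord : List Gate → Gate → List Gate
  | [], g => [g]
  | a :: l, g => a :: (conjWord l g ++ [a.inv])

/-- The Pauli string `l₁ ⋯ l_d g`, which generates `conjWord l g` when `conjOK` holds. -/
def conjStr (par : Bool) : List Gate → Gate → PauliW
  | [], g => g.str par
  | a :: l, g => pmul (a.str par) (conjStr par l g)

/-- At each stage of the conjugation the strings involved anticommute. -/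
def conjOK (par : Bool) : List Gate → Gate → Bool
  | [], _ => true
  | a :: l, g => pmul (a.str par) (a.str par) = (1, 0, 0) ∧
      pmul (a.str par) (conjStr par l g) = pneg (pmul (conjStr par l g) (a.str par)) ∧
      conjOK par l g

theorem inv_sqrt_two_sq : (((Real.sqrt 2 : ℝ) : ℂ)⁻¹) * (((Real.sqrt 2 : ℝ) : ℂ)⁻¹) = 1 / 2 := by
  rw [← mul_inv, ← Complex.ofReal_mul, Real.mul_self_sqrt (by norm_num)]
  norm_num

/-- Conjugating a quarter turn about `Q` by a quarter turn about an anticommuting `P` gives the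
quarter turn about `P Q`. -/
theorem conj_ehalf {n : ℕ} {P Q : QOp n} (hP : P * P = -1) (h : P * Q = -(Q * P)) :
    ehalf P * (ehalf Q * ehalf (-P)) = ehalf (P * Q) := by
  have hQ : Q * P = -(P * Q) := by rw [h, neg_neg]
  have key : (1 + P) * ((1 + Q) * (1 + -P)) = (2 : ℂ) • (1 + P * Q) := by
    calc (1 + P) * ((1 + Q) * (1 + -P))
        = 1 + Q - Q * P + P * Q - P * P - P * (Q * P) := by noncomm_ring
      _ = 1 + Q + P * Q + P * Q + 1 + P * (P * Q) := by rw [hQ, hP]; noncomm_ring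
      _ = (2 : ℂ) • (1 + P * Q) := by rw [← mul_assoc P P, hP, two_smul]; noncomm_ring
  unfold ehalf
  rw [smul_mul_smul_comm, smul_mul_smul_comm, key, smul_smul, ← mul_assoc, mul_assoc, mul_assoc,
    ← mul_assoc _ _ (2 : ℂ), inv_sqrt_two_sq]
  norm_num

theorem op_sq {n p : ℕ} (hp : p + 5 < n) {g : PauliW} (h : pmul g g = (1, 0, 0)) :
    g.op n p * g.op n p = -1 := by
  rw [op_mul hp, h, ← op_one n p, ← op_neg]; rfl

theorem op_sq_one {n p : ℕ} (hp : p + 5 < n) {g : PauliW} (h : pmul g g = (0, 0, 0)) :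
    g.op n p * g.op n p = 1 := by
  rw [op_mul hp, h, ← op_one n p]

theorem op_comm {n p : ℕ} (hp : p + 5 < n) {g h : PauliW} (hc : pmul g h = pmul h g) :
    g.op n p * h.op n p = h.op n p * g.op n p := by
  rw [op_mul hp, hc, op_mul hp]

theorem wordOp_append (n p : ℕ) (par : Bool) (l l' : List Gate) :
    wordOp n p par (l ++ l') = wordOp n p par l * wordOp n p par l' := by
  simp [wordOp]

theorem wordOp_conj {n p : ℕ} (hp : p + 5 < n) (par : Bool) (l : List Gate) (g : Gate)
    (h : conjOK par l g = true) :
    wordOp n p par (conjWord l g) = ehalf ((conjStr par l g).op n p) := by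
  induction l with
  | nil => simp [wordOp, conjWord, conjStr, Gate.op]
  | cons a l ih =>
    simp only [conjOK, decide_eq_true_eq] at h
    obtain ⟨h1, h2, h3⟩ := h
    have e : wordOp n p par (conjWord (a :: l) g) =
        a.op n p par * (wordOp n p par (conjWord l g) * a.inv.op n p par) := by
      simp [conjWord, wordOp]
    have ei : a.inv.op n p par = ehalf (-(a.str par).op n p) := by
      rw [← op_neg]; rfl
    rw [e, ei, ih h3, Gate.op, conj_ehalf (op_sq hp h1), op_mul hp, conjStr]
    rw [op_mul hp, op_mul hp, ← op_neg, h2]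

/-- If `J` generates rotations and commutes with the commuting involutions `Z`, `X`, then the
product is `exp(π J Π)` for the projection `Π = (1 - Z)(1 - X)/4`, that is `1 - 2Π`. -/
theorem four_ehalf {n : ℕ} {J Z X : QOp n} (hJ : J * J = -1) (hZ : Z * Z = 1) (hX : X * X = 1)
    (hJZ : J * Z = Z * J) (hJX : J * X = X * J) (hZX : Z * X = X * Z) :
    ehalf J * ehalf (-(J * Z)) * (ehalf (-(J * X)) * ehalf (J * Z * X)) =
      (1 / 2 : ℂ) • (1 + Z + X - X * Z) := by
  have k1 : (1 + J) * (1 + -(J * Z)) = (1 + Z) + J * (1 - Z) := by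
    calc (1 + J) * (1 + -(J * Z)) = 1 + J - J * Z - J * J * Z := by noncomm_ring
      _ = _ := by rw [hJ]; noncomm_ring
  have k2 : (1 + -(J * X)) * (1 + J * Z * X) = (1 + Z) - J * X * (1 - Z) := by
    have e : J * X * (J * Z * X) = -Z := by
      calc J * X * (J * Z * X) = X * (J * J) * (Z * X) := by rw [hJX]; noncomm_ring
        _ = -(X * (Z * X)) := by rw [hJ]; noncomm_ring
        _ = -((X * X) * Z) := by rw [hZX]; noncomm_ring
        _ = -Z := by rw [hX, one_mul]
    calc (1 + -(J * X)) * (1 + J * Z * X)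
        = 1 + J * (Z * X) - J * X - J * X * (J * Z * X) := by noncomm_ring
      _ = _ := by rw [e, hZX]; noncomm_ring
  have z0 : (1 + Z) * (1 - Z) = 0 := by
    calc (1 + Z) * (1 - Z) = 1 - Z * Z := by noncomm_ring
      _ = 0 := by rw [hZ, sub_self]
  have z0' : (1 - Z) * (1 + Z) = 0 := by
    calc (1 - Z) * (1 + Z) = 1 - Z * Z := by noncomm_ring
      _ = 0 := by rw [hZ, sub_self]
  have zp : (1 + Z) * (1 + Z) = (2 : ℂ) • (1 + Z) := by
    calc (1 + Z) * (1 + Z) = 1 + Z + Z + Z * Z := by noncomm_ring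
      _ = _ := by rw [hZ, two_smul]; abel
  have zm : (1 - Z) * (1 - Z) = (2 : ℂ) • (1 - Z) := by
    calc (1 - Z) * (1 - Z) = 1 - Z - Z + Z * Z := by noncomm_ring
      _ = _ := by rw [hZ, two_smul]; abel
  have c1 : (1 + Z) * (J * X) = J * X * (1 + Z) := by
    calc (1 + Z) * (J * X) = J * X + (Z * J) * X := by noncomm_ring
      _ = J * X + J * (Z * X) := by rw [← hJZ, mul_assoc]
      _ = _ := by rw [hZX]; noncomm_ring
  have c2 : (1 - Z) * (J * X) = J * X * (1 - Z) := by
    calc (1 - Z) * (J * X) = J * X - (Z * J) * X := by noncomm_ring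
      _ = J * X - J * (Z * X) := by rw [← hJZ, mul_assoc]
      _ = _ := by rw [hZX]; noncomm_ring
  have key : ((1 + Z) + J * (1 - Z)) * ((1 + Z) - J * X * (1 - Z)) =
      (2 : ℂ) • (1 + Z + X - X * Z) := by
    calc ((1 + Z) + J * (1 - Z)) * ((1 + Z) - J * X * (1 - Z))
        = (1 + Z) * (1 + Z) - ((1 + Z) * (J * X)) * (1 - Z) + J * ((1 - Z) * (1 + Z))
          - J * (((1 - Z) * (J * X)) * (1 - Z)) := by noncomm_ring
      _ = (1 + Z) * (1 + Z) - J * X * ((1 + Z) * (1 - Z)) + J * ((1 - Z) * (1 + Z))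
          - (J * J) * X * ((1 - Z) * (1 - Z)) := by rw [c1, c2]; noncomm_ring
      _ = (2 : ℂ) • (1 + Z) + X * ((2 : ℂ) • (1 - Z)) := by
          rw [z0, z0', zp, zm, hJ]
          simp only [mul_zero, sub_zero, add_zero, neg_mul, one_mul, sub_neg_eq_add]
      _ = _ := by rw [mul_smul_comm, ← smul_add]; congr 1; noncomm_ring
  unfold ehalf
  rw [smul_mul_smul_comm, smul_mul_smul_comm, smul_mul_smul_comm, k1, k2, key, inv_sqrt_two_sq,
    smul_smul]
  norm_num

/-- `CNOT = 1 - 2Π` with `Π = (1 - Z_c)(1 - X_t)/4`. -/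
theorem CNOT_eq {n : ℕ} (c t : Fin n) (hct : c ≠ t) : CNOTg c t =
    (1 / 2 : ℂ) • (1 + mono (fun y => y) (fun y => y c) + mono (fun y => y + Pi.single t 1) 0 -
      mono (fun y => y + Pi.single t 1) (fun y => y c)) := by
  ext x y
  have hne : y ≠ y + Pi.single t 1 := fun h => by simpa using congrFun h t
  have hu : ∀ b, Function.update y t (y t + b) = y + Pi.single t b := by
    intro b; funext i
    by_cases h : i = t
    · subst h; simp
    · simp [h]
  simp only [CNOTg, mono, Matrix.of_apply, Matrix.smul_apply, Matrix.add_apply, Matrix.sub_apply,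
    Matrix.one_apply, hu, smul_eq_mul, Pi.zero_apply, sgn_zero]
  rcases zmod2_cases (y c) with h | h
  · rw [h]
    by_cases h1 : x = y
    · subst h1; simp [sgn_zero, hne]; norm_num
    · simp [sgn_zero, h1]
  · rw [h]
    by_cases h1 : x = y
    · subst h1; simp [sgn_one, hne]
    · by_cases h2 : x = y + Pi.single t 1
      · simp [sgn_one, h2]; norm_num
      · simp [h1, h2]

/-- `Z` on qubit `p + i`. -/
def zStr (i : Fin 2) : PauliW := (0, 0, fun z => if (z : ℕ) = i then 1 else 0)

/-- `X` on qubit `p + i`. -/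
def xStr (i : Fin 2) : PauliW := (0, fun x => if (x : ℕ) = i + 2 then 1 else 0, 0)

theorem CNOT_window {n p : ℕ} (hp : p + 5 < n) (c t : Fin 2) (hct : c ≠ t) :
    CNOTg (⟨p + c, by omega⟩ : Fin n) ⟨p + t, by omega⟩ =
      (1 / 2 : ℂ) • (1 + (zStr c).op n p + (xStr t).op n p - (xStr t).op n p * (zStr c).op n p) := by
  have hx : ∀ y : QState n, y + xvec n p (xStr t).2.1 = y + Pi.single ⟨p + t, by omega⟩ 1 := by
    intro y
    congr 1
    funext i
    simp only [xvec, xStr]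
    rw [sum_indicator (fun x => x = t + 2) p (i + 2) (by intro x hx; omega)]
    by_cases h : (i : ℕ) = p + t
    · have : i = ⟨p + t, by omega⟩ := Fin.ext h
      rw [if_pos ⟨by omega, by omega⟩, this, Pi.single_eq_same]
    · rw [if_neg (by omega), Pi.single_eq_of_ne]
      intro h'; exact h (congrArg Fin.val h')
  have hx0 : xvec n p 0 = 0 := by funext i; simp [xvec]
  have hz0 : ∀ y : QState n, zform p 0 y = 0 := by intro y; simp [zform]
  have hz : ∀ y : QState n, zform p (zStr c).2.2 y = y ⟨p + c, by omega⟩ := by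
    intro y
    rw [← bitAt_lt y (by omega)]
    fin_cases c <;> simp [zform, zStr, Fin.sum_univ_seven]
  have eZ : (zStr c).op n p = mono (fun y => y) (fun y => y ⟨p + c, by omega⟩) := by
    unfold PauliW.op
    congr 1
    · funext y; simp [zStr, hx0]
    · funext y; rw [hz]; simp [zStr]
  have eX : (xStr t).op n p = mono (fun y => y + Pi.single ⟨p + t, by omega⟩ 1) 0 := by
    unfold PauliW.op
    congr 1
    · funext y; exact hx y
    · funext y; simp [xStr, hz0]
  rw [CNOT_eq _ _ (by simpa [Fin.ext_iff] using hct), eZ, eX, mono_mul]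
  simp

/-- A conjugation word: the conjugating gates and the central gate. -/
abbrev Conj := List Gate × Gate

/-- The word of four conjugations. -/
def planWord (a b c d : Conj) : List Gate :=
  conjWord a.1 a.2 ++ conjWord b.1 b.2 ++ (conjWord c.1 c.2 ++ conjWord d.1 d.2)

/-- The relations that `four_ehalf` requires of `J`, `Z`, `X`. -/
def relOK (J Z X : PauliW) : Bool :=
  decide (pmul J J = (1, 0, 0) ∧ pmul Z Z = (0, 0, 0) ∧ pmul X X = (0, 0, 0) ∧
    pmul J Z = pmul Z J ∧ pmul J X = pmul X J ∧ pmul Z X = pmul X Z)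

/-- The four conjugations generate `J`, `-JZ`, `-JX`, `JZX` with `J`, `Z = Z_c`, `X = X_t` as in
`four_ehalf`, and their word fits into sixteen periods of the ladder. -/
def planOK (par : Bool) (ctl tgt : Fin 2) (a b c d : Conj) : Bool :=
  decide ((conjOK par a.1 a.2 = true ∧ conjOK par b.1 b.2 = true ∧ conjOK par c.1 c.2 = true ∧
    conjOK par d.1 d.2 = true) ∧ phase (planWord a b c d) ≤ 48 ∧
    relOK (conjStr par a.1 a.2) (zStr ctl) (xStr tgt) = true ∧
    conjStr par b.1 b.2 = pneg (pmul (conjStr par a.1 a.2) (zStr ctl)) ∧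
    conjStr par c.1 c.2 = pneg (pmul (conjStr par a.1 a.2) (xStr tgt)) ∧
    conjStr par d.1 d.2 = pmul (pmul (conjStr par a.1 a.2) (zStr ctl)) (xStr tgt))

/-- A valid plan realizes the CNOT in the interaction picture. -/
theorem wordOp_plan {n p : ℕ} (hp : p + 5 < n) (par : Bool) (ctl tgt : Fin 2) (hct : ctl ≠ tgt)
    (a b c d : Conj) (h : planOK par ctl tgt a b c d = true) :
    wordOp n p par (planWord a b c d) =
      CNOTg (⟨p + ctl, by omega⟩ : Fin n) ⟨p + tgt, by omega⟩ := by
  obtain ⟨⟨ha, hb, hc, hd⟩, -, hr, eb, ec, ed⟩ := of_decide_eq_true h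
  obtain ⟨hJ, hZ, hX, hJZ, hJX, hZX⟩ := of_decide_eq_true hr
  rw [CNOT_window hp ctl tgt hct, planWord, wordOp_append, wordOp_append, wordOp_append,
    wordOp_conj hp par _ _ ha, wordOp_conj hp par _ _ hb, wordOp_conj hp par _ _ hc,
    wordOp_conj hp par _ _ hd, eb, ec, ed,
    op_neg, op_neg, ← op_mul hp, ← op_mul hp, ← op_mul hp, ← op_mul hp]
  exact four_ehalf (op_sq hp hJ) (op_sq_one hp hZ) (op_sq_one hp hX) (op_comm hp hJZ)
    (op_comm hp hJX) (op_comm hp hZX)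

/-- A valid plan realizes the CNOT: phase `48 = 3 * 16` is the time `16 D`, when the interaction
picture agrees with the circuit itself. -/
theorem CNOT_of_plan {n p D : ℕ} (hp : p + 5 < n) (hD : 2 ≤ D) (hL : ladderCNOT n ^ D = 1)
    (par : Bool) (hpar : (p + 1) % 2 = (n + if par then 1 else 0) % 2) (ctl tgt : Fin 2)
    (hct : ctl ≠ tgt) (a b c d : Conj) (h : planOK par ctl tgt a b c d = true) :
    ∃ α, ansatzY n α (16 * D) =
      CNOTg (⟨p + ctl, by omega⟩ : Fin n) ⟨p + tgt, by omega⟩ := by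
  have hph := (of_decide_eq_true h).2.1
  rw [← wordOp_plan hp par ctl tgt hct a b c d h, mul_comm 16]
  apply exists_of_reach hL
  have e : tm D 48 = D * 16 := tm_three_mul D 16
  rw [← e]
  exact (reach_word hp hD hL par hpar (planWord a b c d)).mono (tm_mono D hD hph)

/-- Plans for control `p + 1` and target `p`, found by computer search over the generators; their
validity is a finite computation with Pauli strings. -/
theorem plan_down (par : Bool) : ∃ a b c d, planOK par 1 0 a b c d = true := by
  cases par
  · exact ⟨([(0, 3, 1), (0, 4, 2), (0, 1, 2)], (0, 3, 0)),
      ([(0, 0, 0), (0, 2, 1), (0, 1, 1), (0, 0, 1)], (0, 4, 2)),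
      ([(0, 1, 0), (0, 4, 2)], (0, 2, 1)),
      ([(0, 4, 0), (0, 2, 0)], (1, 3, 2)), by decide +kernel⟩
  · exact ⟨([(0, 3, 2), (0, 4, 1), (0, 1, 1)], (0, 3, 0)),
      ([(0, 0, 0), (0, 2, 2), (0, 1, 2), (0, 0, 2)], (0, 4, 1)),
      ([(0, 1, 0), (0, 4, 1)], (0, 2, 2)),
      ([(0, 4, 0), (0, 2, 0)], (1, 3, 1)), by decide +kernel⟩

/-- Plans for control `p` and target `p + 1`, found in the same way. -/
theorem plan_up (par : Bool) : ∃ a b c d, planOK par 0 1 a b c d = true := by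
  cases par
  · exact ⟨([(0, 4, 0), (0, 2, 0)], (0, 3, 2)),
      ([(0, 2, 1), (0, 1, 1), (0, 0, 1)], (1, 4, 2)),
      ([(0, 2, 1)], (1, 4, 2)),
      ([(0, 4, 0), (0, 2, 0), (0, 1, 1), (0, 0, 1)], (0, 3, 2)), by decide +kernel⟩
  · exact ⟨([(0, 4, 0), (0, 2, 0)], (0, 3, 1)),
      ([(0, 2, 2), (0, 1, 2), (0, 0, 2)], (1, 4, 1)),
      ([(0, 4, 1)], (0, 2, 2)),
      ([(0, 4, 0), (0, 2, 0), (0, 1, 2), (0, 0, 2)], (0, 3, 1)), by decide +kernel⟩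

/-- for every `n ≥ 6` and `1 ≤ j ≤ n−5` (1-based qubit `q` ↦ index `q−1`),
the `n`-qubit Ry-CNOT ansatz of depth `16·2^{⌈log₂ n⌉}` realizes both `CNOT_{j+1,j}` and
`CNOT_{j,j+1}` exactly, for suitable angles. (`Nat.clog 2 n` is the least `m` with `n ≤ 2^m`.) -/
theorem nearest_neighbor_CNOT_in_ansatzY (n : ℕ) (hn : 6 ≤ n) (j : ℕ)
    (hj1 : 1 ≤ j) (hj2 : j ≤ n - 5) :
    (∃ α : ℕ → Fin n → ℝ,
      ansatzY n α (16 * 2 ^ Nat.clog 2 n) =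
        CNOTg (⟨j, by omega⟩ : Fin n) ⟨j - 1, by omega⟩) ∧
    (∃ α : ℕ → Fin n → ℝ,
      ansatzY n α (16 * 2 ^ Nat.clog 2 n) =
        CNOTg (⟨j - 1, by omega⟩ : Fin n) ⟨j, by omega⟩) := by
  obtain ⟨p, rfl⟩ : ∃ p, j = p + 1 := ⟨j - 1, by omega⟩
  have hp : p + 5 < n := by omega
  have hn' : n ≤ 2 ^ Nat.clog 2 n := Nat.le_pow_clog (by norm_num) n
  have hL := ladder_pow n _ hn'
  have hD : 2 ≤ 2 ^ Nat.clog 2 n := by omega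
  -- which of the two layers targets a given qubit depends on the parity of its distance to the end
  obtain ⟨par, hpar⟩ : ∃ par : Bool, (p + 1) % 2 = (n + if par then 1 else 0) % 2 := by
    by_cases h : (p + 1) % 2 = n % 2
    · exact ⟨false, by simpa using h⟩
    · exact ⟨true, by simp; omega⟩
  constructor
  · obtain ⟨a, b, c, d, h⟩ := plan_down par
    exact CNOT_of_plan hp hD hL par hpar 1 0 (by decide) a b c d h
  · obtain ⟨a, b, c, d, h⟩ := plan_up par
    exact CNOT_of_plan hp hD hL par hpar 0 1 (by decide) a b c d h
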